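/- Let r ≥ 2 and let a_1, …, a_r be nonnegative integers. Define G(𝔞) := Σ_c p^{Σ_{i=1}^{r−1}(c_i − 1)} ∈ ℚ(p), where the sum is over all integer sequences (c_1, …, c_{r−1}) with c_0 := 1 and 1 ≤ c_i ≤ c_{i−1} + a_i for 1 ≤ i ≤ r−1 (these sequences encode the heaps of type II with piece lengths a_1, …, a_r). Set D(𝔞) := Σ_{j=1}^{r−1}(r−j)·a_j. For 1 ≤ i, j ≤ r−1, define w_{ij} ∈ ℚ(p) by: w_{ij} = p^{−(j−i)(j−i+1)/2·[j>i]} · qbinom(1 + Σ_{t=1}^{i} a_t, j−i+1) evaluated at q = p^{−1}, whenever i−1 ≤ j ≤ i + Σ_{t=1}^{i} a_t, and w_{ij} = 0 otherwise, where [j>i] is 1 if j > i and 0 otherwise, and qbinom(n,m) denotes the Gaussian binomial coefficient (interpreted as 0 when m > n or m < 0, and as 1 when m = 0). Then G(𝔞) = p^{D(𝔞)} · det[(w_{ij})_{1≤i,j≤r−1}]. -/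

import Mathlib

attribute [local instance] Classical.propDecidable

/-- The sequence of left abscissae of a heap of type II: `c_0 = 1` and `c_i` (for
`1 ≤ i ≤ m`) is given by the `i`-th entry of `c`. -/
def leftAbs (m N : ℕ) (c : Fin m → Fin N) : ℕ → ℕ
  | 0 => 1
  | i + 1 => if h : i < m then (c ⟨i, h⟩ : ℕ) else 0

/-- The `q`-factorial `[n]_q! = ∏_{i=1}^{n} (1 + q + … + q^{i-1})`. -/
noncomputable def qfact (q : RatFunc ℚ) (n : ℕ) : RatFunc ℚ :=
  ∏ i ∈ Finset.range n, ∑ j ∈ Finset.range (i + 1), q ^ j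

/-- The Gaussian binomial coefficient `[n choose m]_q`, interpreted as `0` when `m > n`
and as `1` when `m = 0`. -/
noncomputable def qbinom (q : RatFunc ℚ) (n m : ℕ) : RatFunc ℚ :=
  if m ≤ n then qfact q n / (qfact q m * qfact q (n - m)) else 0

/-- `G(𝔞) = Σ_c p^{Σ_{i=1}^{r-1} (c_i - 1)}`, summed over all sequences
`(c_1, …, c_{r-1})` with `c_0 := 1` and `1 ≤ c_i ≤ c_{i-1} + a_i`
(heaps of type II with piece lengths `a_1, …, a_r`). -/
noncomputable def heapGF (r : ℕ) (a : ℕ → ℕ) : RatFunc ℚ :=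
  ∑ c ∈ Finset.univ.filter
      (fun c : Fin (r - 1) → Fin (2 + ∑ t ∈ Finset.Icc 1 (r - 1), a t) =>
        ∀ i ∈ Finset.Icc 1 (r - 1),
          1 ≤ leftAbs _ _ c i ∧ leftAbs _ _ c i ≤ leftAbs _ _ c (i - 1) + a i),
    RatFunc.X ^ (∑ i ∈ Finset.Icc 1 (r - 1), (leftAbs _ _ c i - 1))

/-- The matrix entry `w_{ij}` (for `1 ≤ i,j ≤ r-1`):
`w_{ij} = p^{-(j-i)(j-i+1)/2·[j>i]} · qbinom(1 + Σ_{t≤i} a_t, j-i+1)` at `q = p⁻¹`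
when `i - 1 ≤ j ≤ i + Σ_{t≤i} a_t`, and `0` otherwise. -/
noncomputable def wEntry (a : ℕ → ℕ) (i j : ℕ) : RatFunc ℚ :=
  if i - 1 ≤ j ∧ j ≤ i + ∑ t ∈ Finset.Icc 1 i, a t then
    (RatFunc.X⁻¹ : RatFunc ℚ) ^ (if i < j then (j - i) * (j - i + 1) / 2 else 0) *
      qbinom RatFunc.X⁻¹ (1 + ∑ t ∈ Finset.Icc 1 i, a t) (j + 1 - i)
  else 0

/-!
Reflecting `d_i = 1 + (a_1 + ⋯ + a_i) - c_i` turns the abscissae of a heap into a weakly increasing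
sequence `0 = d_0 ≤ d_1 ≤ ⋯` with `d_i ≤ a_1 + ⋯ + a_i`, and the weight into
`p ^ ∑ i (a_1 + ⋯ + a_i) · ∏ i q ^ d_i` with `q = p⁻¹`. For any weights `x`, the sum of
`∏ i x_{d_i}` over such sequences with `d_i ≤ b_i` is the Jacobi–Trudi type determinant of the
elementary symmetric functions `e_{j-i+1}(x_0, …, x_{b_i})`: expanding along the last row and
telescoping `∑_{d ≤ y ≤ b} x_y e_k(x_0, …, x_{y-1})` give the same recursion on both sides. For
`x_i = q ^ i`, the `q`-binomial theorem identifies its entries with the `w_{ij}`.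
-/

section PrefixEsymm

variable {R : Type*} [CommSemiring R] (x : ℕ → R)

/-- The elementary symmetric function `e_k(x_0, …, x_{n-1})` of a prefix of the sequence `x`. -/
def prefixEsymm (k n : ℕ) : R := ((Multiset.range n).map x).esymm k

@[simp]
lemma prefixEsymm_zero (n : ℕ) : prefixEsymm x 0 n = 1 := by
  simp [prefixEsymm, Multiset.esymm]

lemma prefixEsymm_succ_succ (k n : ℕ) :
    prefixEsymm x (k + 1) (n + 1) = prefixEsymm x (k + 1) n + x n * prefixEsymm x k n := by
  simp [prefixEsymm, Multiset.esymm, Multiset.range_succ, Multiset.powersetCard_cons,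
    Multiset.map_map, Multiset.sum_map_mul_left]

lemma prefixEsymm_eq_zero_of_lt {k n : ℕ} (h : n < k) : prefixEsymm x k n = 0 := by
  simp [prefixEsymm, Multiset.esymm, Multiset.powersetCard_eq_empty, h]

lemma prefixEsymm_add_sum_Ico (k : ℕ) {d n : ℕ} (h : d ≤ n) :
    prefixEsymm x (k + 1) d + ∑ y ∈ Finset.Ico d n, x y * prefixEsymm x k y =
      prefixEsymm x (k + 1) n := by
  induction n, h using Nat.le_induction with
  | base => simp
  | succ n hn ih => rw [Finset.sum_Ico_succ_top hn, ← add_assoc, ih, prefixEsymm_succ_succ]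

end PrefixEsymm

section FlaggedSum

variable {R : Type*} [CommSemiring R] (x : ℕ → R) (b : ℕ → ℕ)

/-- The sum of `x_{d_1} ⋯ x_{d_n} · g(d_n)` over all sequences `0 = d_0 ≤ d_1 ≤ ⋯ ≤ d_n` with
`d_i ≤ b_i`, as a linear functional of `g`. It is defined by summing over the last entry first. -/
def flaggedSum : ℕ → (ℕ → R) →ₗ[R] R
  | 0 => LinearMap.proj 0
  | n + 1 => flaggedSum n ∘ₗ LinearMap.pi fun d =>
      ∑ y ∈ Finset.Ico d (b (n + 1) + 1), x y • LinearMap.proj y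

lemma flaggedSum_zero (g : ℕ → R) : flaggedSum x b 0 g = g 0 := rfl

lemma flaggedSum_succ (n : ℕ) (g : ℕ → R) :
    flaggedSum x b (n + 1) g =
      flaggedSum x b n fun d => ∑ y ∈ Finset.Ico d (b (n + 1) + 1), x y * g y := by
  rw [flaggedSum, LinearMap.comp_apply]
  congr 1
  ext d
  simp

lemma flaggedSum_congr {n : ℕ} {g h : ℕ → R} (hgh : ∀ d ≤ b n, g d = h d) :
    flaggedSum x b n g = flaggedSum x b n h := by
  cases n with
  | zero => exact hgh 0 (Nat.zero_le _)
  | succ n =>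
    simp only [flaggedSum_succ]
    congr 1
    ext d
    refine Finset.sum_congr rfl fun y hy => ?_
    rw [hgh y (Nat.lt_succ_iff.mp (Finset.mem_Ico.mp hy).2)]

variable {b}

lemma flaggedSum_prefixEsymm_succ (hb : Monotone b) (n k : ℕ) :
    flaggedSum x b n (prefixEsymm x (k + 1)) + flaggedSum x b (n + 1) (prefixEsymm x k) =
      prefixEsymm x (k + 1) (b (n + 1) + 1) * flaggedSum x b n (prefixEsymm x 0) := by
  rw [flaggedSum_succ, ← map_add, ← smul_eq_mul, ← map_smul]
  refine flaggedSum_congr x b fun d hd => ?_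
  have hdn : d ≤ b (n + 1) + 1 := (hd.trans (hb n.le_succ)).trans (Nat.le_succ _)
  simp [prefixEsymm_add_sum_Ico x k hdn]

end FlaggedSum

section FlaggedDeterminant

variable {R : Type*}

/-- The square matrix of size `m + 1` whose first `m` columns are those of the infinite array `W`
and whose last column is `v`. -/
def borderedMatrix (W : ℕ → ℕ → R) (v : ℕ → R) (m : ℕ) : Matrix (Fin (m + 1)) (Fin (m + 1)) R :=
  Matrix.of fun i => Fin.snoc (fun j : Fin m => W i j) (v i)

lemma borderedMatrix_castSucc (W : ℕ → ℕ → R) (v : ℕ → R) (m : ℕ) (i : Fin (m + 1)) (j : Fin m) :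
    borderedMatrix W v m i j.castSucc = W i j := by
  simp [borderedMatrix]

lemma borderedMatrix_last (W : ℕ → ℕ → R) (v : ℕ → R) (m : ℕ) (i : Fin (m + 1)) :
    borderedMatrix W v m i (Fin.last m) = v i := by
  simp [borderedMatrix]

lemma borderedMatrix_self (W : ℕ → ℕ → R) (m : ℕ) :
    borderedMatrix W (fun i => W i m) m = Matrix.of fun i j : Fin (m + 1) => W i j := by
  ext i j
  cases j using Fin.lastCases with
  | last => simp [borderedMatrix_last]
  | cast j => simp [borderedMatrix_castSucc]

lemma borderedMatrix_succ_submatrix_last (W : ℕ → ℕ → R) (v : ℕ → R) (m : ℕ) :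
    (borderedMatrix W v (m + 1)).submatrix
        (Fin.last (m + 1)).succAbove (Fin.last (m + 1)).succAbove =
      borderedMatrix W (fun i => W i m) m := by
  ext i j
  simp [borderedMatrix_self, borderedMatrix_castSucc]

lemma borderedMatrix_succ_submatrix_castSucc_last (W : ℕ → ℕ → R) (v : ℕ → R) (m : ℕ) :
    (borderedMatrix W v (m + 1)).submatrix
        (Fin.last (m + 1)).succAbove (Fin.last m).castSucc.succAbove =
      borderedMatrix W v m := by
  ext i j
  cases j using Fin.lastCases with
  | last => simp [borderedMatrix_last]
  | cast j => simp [borderedMatrix_castSucc, Fin.castSucc_succAbove_castSucc]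

variable [CommRing R]

lemma det_borderedMatrix_succ {W : ℕ → ℕ → R} {m : ℕ}
    (hrow : ∀ j < m, W (m + 1) j = 0) (v : ℕ → R) :
    (borderedMatrix W v (m + 1)).det =
      v (m + 1) * (borderedMatrix W (fun i => W i m) m).det -
        W (m + 1) m * (borderedMatrix W v m).det := by
  have hlow (j : Fin m) : W (m + 1) j = 0 := hrow j j.isLt
  have hodd : (-1 : R) ^ (m + 1 + m) = -1 := Odd.neg_one_pow ⟨m, by ring⟩
  have heven : (-1 : R) ^ (m + 1 + (m + 1)) = 1 := Even.neg_one_pow ⟨m + 1, rfl⟩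
  rw [Matrix.det_succ_row _ (Fin.last (m + 1)), Fin.sum_univ_castSucc, Fin.sum_univ_castSucc]
  simp only [borderedMatrix_succ_submatrix_last, borderedMatrix_succ_submatrix_castSucc_last,
    borderedMatrix_castSucc, borderedMatrix_last, Fin.val_last, Fin.val_castSucc,
    Nat.succ_eq_add_one, hlow, hodd, heven, mul_zero, zero_mul, Finset.sum_const_zero]
  ring

/-- The `(i, j)` entry, counted from `0`, of the Jacobi–Trudi type matrix with flag `b`: the
elementary symmetric function `e_{j-i+1}(x_0, …, x_{b_{i+1}})`, which is `0` in negative degree. -/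
def flaggedEsymm (x : ℕ → R) (b : ℕ → ℕ) (i j : ℕ) : R :=
  if i ≤ j + 1 then prefixEsymm x (j + 1 - i) (b (i + 1) + 1) else 0

lemma flaggedEsymm_add (x : ℕ → R) (b : ℕ → ℕ) (i k : ℕ) :
    flaggedEsymm x b i (i + k) = prefixEsymm x (k + 1) (b (i + 1) + 1) := by
  simp [flaggedEsymm, add_assoc]

lemma flaggedEsymm_succ_self (x : ℕ → R) (b : ℕ → ℕ) (i : ℕ) :
    flaggedEsymm x b (i + 1) i = 1 := by
  simp [flaggedEsymm]

lemma flaggedEsymm_eq_zero (x : ℕ → R) (b : ℕ → ℕ) {i j : ℕ} (h : j + 1 < i) :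
    flaggedEsymm x b i j = 0 :=
  if_neg h.not_ge

variable (x : ℕ → R) {b : ℕ → ℕ}

lemma det_borderedMatrix_flaggedEsymm (hb : Monotone b) (m k : ℕ) :
    (borderedMatrix (flaggedEsymm x b) (fun i => flaggedEsymm x b i (m + k)) m).det =
      flaggedSum x b (m + 1) (prefixEsymm x k) := by
  induction m generalizing k with
  | zero =>
    have hrec := flaggedSum_prefixEsymm_succ x hb 0 k
    rw [flaggedSum_zero, flaggedSum_zero, prefixEsymm_eq_zero_of_lt x k.succ_pos, zero_add,
      prefixEsymm_zero, mul_one] at hrec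
    rw [hrec, Matrix.det_fin_one, ← flaggedEsymm_add]
    exact borderedMatrix_last _ _ 0 0
  | succ m ih =>
    have hcol : m + 1 + k = m + (k + 1) := by ring
    have hself := ih 0
    rw [add_zero] at hself
    rw [det_borderedMatrix_succ fun _ hj => flaggedEsymm_eq_zero x b (Nat.succ_lt_succ hj),
      flaggedEsymm_add, flaggedEsymm_succ_self, one_mul, hself, hcol, ih, sub_eq_iff_eq_add',
      flaggedSum_prefixEsymm_succ x hb]

theorem det_flaggedEsymm (hb : Monotone b) (n : ℕ) :
    (Matrix.of fun i j : Fin n => flaggedEsymm x b i j).det = flaggedSum x b n 1 := by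
  cases n with
  | zero => simp [flaggedSum_zero]
  | succ m =>
    have hone : (1 : ℕ → R) = prefixEsymm x 0 := by ext; simp
    rw [← borderedMatrix_self, hone]
    exact det_borderedMatrix_flaggedEsymm x hb m 0

end FlaggedDeterminant

section QBinomial

variable {q : RatFunc ℚ}

lemma qfact_zero (q : RatFunc ℚ) : qfact q 0 = 1 := by
  simp [qfact]

lemma qfact_succ (q : RatFunc ℚ) (n : ℕ) :
    qfact q (n + 1) = qfact q n * ∑ j ∈ Finset.range (n + 1), q ^ j :=
  Finset.prod_range_succ _ _

lemma qfact_ne_zero (hq : ∀ n ≠ 0, q ^ n ≠ 1) (n : ℕ) : qfact q n ≠ 0 := by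
  refine Finset.prod_ne_zero_iff.mpr fun i _ hsum => hq (i + 1) i.succ_ne_zero ?_
  rw [← sub_eq_zero, ← geom_sum_mul, hsum, zero_mul]

lemma qbinom_eq_zero_of_lt (q : RatFunc ℚ) {n k : ℕ} (h : n < k) : qbinom q n k = 0 :=
  if_neg h.not_ge

lemma qbinom_add_eq_div (q : RatFunc ℚ) (m k : ℕ) :
    qbinom q (m + k) k = qfact q (m + k) / (qfact q k * qfact q m) := by
  simp [qbinom]

lemma qbinom_zero_right (hq : ∀ n ≠ 0, q ^ n ≠ 1) (n : ℕ) : qbinom q n 0 = 1 := by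
  simpa [qfact_zero, qfact_ne_zero hq n] using qbinom_add_eq_div q n 0

lemma qbinom_self (hq : ∀ n ≠ 0, q ^ n ≠ 1) (n : ℕ) : qbinom q n n = 1 := by
  simpa [qfact_zero, qfact_ne_zero hq n] using qbinom_add_eq_div q 0 n

lemma qbinom_succ_succ (hq : ∀ n ≠ 0, q ^ n ≠ 1) (m k : ℕ) :
    qbinom q (m + k + 1) (k + 1) =
      qbinom q (m + k) (k + 1) + q ^ m * qbinom q (m + k) k := by
  cases m with
  | zero => simp [qbinom_self hq, qbinom_eq_zero_of_lt]
  | succ m =>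
    have hgeom : ∑ j ∈ Finset.range (m + (k + 1) + 1), q ^ j =
        ∑ j ∈ Finset.range (m + 1), q ^ j +
          q ^ (m + 1) * ∑ j ∈ Finset.range (k + 1), q ^ j := by
      rw [add_right_comm, Finset.sum_range_add, Finset.mul_sum]
      simp only [pow_add]
    obtain ⟨hm, hm'⟩ := mul_ne_zero_iff.mp (qfact_succ q m ▸ qfact_ne_zero hq (m + 1))
    obtain ⟨hk, hk'⟩ := mul_ne_zero_iff.mp (qfact_succ q k ▸ qfact_ne_zero hq (k + 1))
    have htop := qbinom_add_eq_div q (m + 1) (k + 1)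
    have hleft := qbinom_add_eq_div q m (k + 1)
    have hright := qbinom_add_eq_div q (m + 1) k
    rw [show m + 1 + k = m + (k + 1) by ring] at hright ⊢
    rw [show m + 1 + (k + 1) = m + (k + 1) + 1 by ring, qfact_succ, hgeom] at htop
    rw [htop, hleft, hright, qfact_succ q m, qfact_succ q k]
    field_simp

theorem prefixEsymm_pow (hq : ∀ n ≠ 0, q ^ n ≠ 1) (k n : ℕ) :
    prefixEsymm (q ^ ·) k n = q ^ k.choose 2 * qbinom q n k := by
  induction n generalizing k with
  | zero =>
    cases k with
    | zero => simp [qbinom_zero_right hq]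
    | succ k => simp [prefixEsymm_eq_zero_of_lt, qbinom_eq_zero_of_lt]
  | succ n ih =>
    cases k with
    | zero => simp [qbinom_zero_right hq]
    | succ k =>
      rcases lt_or_ge n k with hlt | hle
      · rw [prefixEsymm_eq_zero_of_lt _ (by omega), qbinom_eq_zero_of_lt q (by omega), mul_zero]
      · obtain ⟨m, rfl⟩ := Nat.exists_eq_add_of_le' hle
        have hchoose : (k + 1).choose 2 = k + k.choose 2 := by simp [Nat.choose_succ_succ' k 1]
        rw [prefixEsymm_succ_succ, ih, ih, qbinom_succ_succ hq, hchoose]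
        ring

lemma X_inv_pow_ne_one {K : Type*} [Field K] {n : ℕ} (hn : n ≠ 0) :
    (RatFunc.X⁻¹ : RatFunc K) ^ n ≠ 1 := by
  rw [inv_pow, Ne, inv_eq_one]
  intro hX
  have htrans := (RatFunc.transcendental_X (K := K)).pow hn.bot_lt
  exact htrans (hX ▸ isAlgebraic_one)

end QBinomial

/-- The sum `a_1 + ⋯ + a_i` of the lengths of the top `i` pieces. -/
def totalLength (a : ℕ → ℕ) (i : ℕ) : ℕ := ∑ t ∈ Finset.Icc 1 i, a t

lemma totalLength_zero (a : ℕ → ℕ) : totalLength a 0 = 0 := by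
  simp [totalLength]

lemma totalLength_succ (a : ℕ → ℕ) (i : ℕ) :
    totalLength a (i + 1) = totalLength a i + a (i + 1) :=
  Finset.sum_Icc_succ_top (by omega) a

lemma totalLength_mono (a : ℕ → ℕ) : Monotone (totalLength a) :=
  monotone_nat_of_le_succ fun i => by simp [totalLength_succ]

lemma sum_Icc_mul_eq_sum_totalLength (a : ℕ → ℕ) (n : ℕ) :
    ∑ j ∈ Finset.Icc 1 n, (n + 1 - j) * a j = ∑ i ∈ Finset.Icc 1 n, totalLength a i := by
  simp only [totalLength]
  rw [Finset.sum_comm' (t' := Finset.Icc 1 n) (s' := fun j => Finset.Icc j n)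
    (by simp only [Finset.mem_Icc]; omega)]
  simp

lemma wEntry_succ_succ (a : ℕ → ℕ) (i j : ℕ) :
    wEntry a (i + 1) (j + 1) = flaggedEsymm (RatFunc.X⁻¹ ^ ·) (totalLength a) i j := by
  rw [wEntry, ← totalLength, flaggedEsymm]
  by_cases hij : i ≤ j + 1
  · obtain ⟨k, hk⟩ := Nat.exists_eq_add_of_le hij
    have hexp : (if i + 1 < j + 1 then (j + 1 - (i + 1)) * (j + 1 - (i + 1) + 1) / 2 else 0) =
        k.choose 2 := by
      rw [Nat.choose_two_right]
      split_ifs with hlt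
      · rw [show j + 1 - (i + 1) = k - 1 by omega, Nat.sub_add_cancel (by omega), mul_comm]
      · have hk' : k = 0 ∨ k = 1 := by omega
        rcases hk' with rfl | rfl <;> rfl
    rw [if_pos hij, prefixEsymm_pow fun _ => X_inv_pow_ne_one, hexp,
      show j + 1 + 1 - (i + 1) = k by omega, show j + 1 - i = k by omega,
      add_comm 1 (totalLength a (i + 1))]
    by_cases hdeg : k ≤ totalLength a (i + 1) + 1
    · rw [if_pos (by omega)]
    · rw [if_neg (by omega), qbinom_eq_zero_of_lt _ (by omega), mul_zero]
  · rw [if_neg (by omega), if_neg hij]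

section HeapSum

variable {a : ℕ → ℕ} {n N : ℕ}

/-- The abscissae `c_1, …, c_n` (with `c_0 = 1`) are those of the lower pieces of a heap of
type II whose pieces have lengths `a_1, a_2, …`. -/
def IsHeapTypeII (a : ℕ → ℕ) (c : Fin n → Fin N) : Prop :=
  ∀ i ∈ Finset.Icc 1 n, 1 ≤ leftAbs n N c i ∧ leftAbs n N c i ≤ leftAbs n N c (i - 1) + a i

lemma leftAbs_snoc_of_le (c : Fin n → Fin N) (y : Fin N) {i : ℕ} (h : i ≤ n) :
    leftAbs (n + 1) N (Fin.snoc c y : Fin (n + 1) → Fin N) i = leftAbs n N c i := by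
  cases i with
  | zero => rfl
  | succ i =>
    have hi : i < n := h
    simp [leftAbs, Fin.snoc, hi, Nat.lt_succ_of_lt hi]

lemma leftAbs_snoc_last (c : Fin n → Fin N) (y : Fin N) :
    leftAbs (n + 1) N (Fin.snoc c y : Fin (n + 1) → Fin N) (n + 1) = y := by
  simp [leftAbs, Fin.snoc]

lemma isHeapTypeII_snoc (c : Fin n → Fin N) (y : Fin N) :
    IsHeapTypeII a (Fin.snoc c y : Fin (n + 1) → Fin N) ↔
      IsHeapTypeII a c ∧ 1 ≤ (y : ℕ) ∧ (y : ℕ) ≤ leftAbs n N c n + a (n + 1) := by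
  have hIcc : Finset.Icc 1 (n + 1) = insert (n + 1) (Finset.Icc 1 n) := by
    ext i
    simp only [Finset.mem_Icc, Finset.mem_insert]
    omega
  simp only [IsHeapTypeII, hIcc, Finset.forall_mem_insert, leftAbs_snoc_last,
    Nat.add_sub_cancel, leftAbs_snoc_of_le c y le_rfl]
  rw [and_comm]
  refine and_congr_left' (forall₂_congr fun i hi => ?_)
  have hin : i ≤ n := (Finset.mem_Icc.mp hi).2
  rw [leftAbs_snoc_of_le c y hin, leftAbs_snoc_of_le c y ((Nat.sub_le i 1).trans hin)]

lemma sum_leftAbs_snoc (c : Fin n → Fin N) (y : Fin N) :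
    ∑ i ∈ Finset.Icc 1 (n + 1), (leftAbs (n + 1) N (Fin.snoc c y : Fin (n + 1) → Fin N) i - 1) =
      ∑ i ∈ Finset.Icc 1 n, (leftAbs n N c i - 1) + (y - 1) := by
  rw [Finset.sum_Icc_succ_top (by omega), leftAbs_snoc_last]
  congr 1
  refine Finset.sum_congr rfl fun i hi => ?_
  rw [leftAbs_snoc_of_le c y (Finset.mem_Icc.mp hi).2]

/-- The generating function of the heaps of type II with `n` lower pieces, all abscissae being
less than `N`, where in addition each heap is weighted by the value of `g` at its last abscissa. -/
noncomputable def heapSum {K : Type*} [CommSemiring K] (p : K) (a : ℕ → ℕ) (n N : ℕ)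
    (g : ℕ → K) : K :=
  ∑ c : Fin n → Fin N with IsHeapTypeII a c,
    p ^ (∑ i ∈ Finset.Icc 1 n, (leftAbs n N c i - 1)) * g (leftAbs n N c n)

lemma heapSum_succ {K : Type*} [CommSemiring K] (p : K) (a : ℕ → ℕ) (n N : ℕ) (g : ℕ → K) :
    heapSum p a (n + 1) N g = heapSum p a n N fun l =>
      ∑ y ∈ Finset.range N with 1 ≤ y ∧ y ≤ l + a (n + 1), p ^ (y - 1) * g y := by
  simp only [heapSum, Finset.sum_filter]
  rw [← (Fin.snocEquiv fun _ => Fin N).sum_comp, Fintype.sum_prod_type_right]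
  have hsnoc (c : Fin n → Fin N) (y : Fin N) : (Fin.snocEquiv fun _ => Fin N) (y, c) =
      (Fin.snoc c y : Fin (n + 1) → Fin N) := rfl
  refine Finset.sum_congr rfl fun c _ => ?_
  simp only [hsnoc, ← Fin.sum_univ_eq_sum_range, isHeapTypeII_snoc, sum_leftAbs_snoc,
    leftAbs_snoc_last, pow_add, mul_assoc, ite_and, Finset.mul_sum, mul_ite, mul_zero]
  split_ifs <;> simp

lemma sum_pow_mul_reflect {K : Type*} [Field K] {p : K} (hp : p ≠ 0) {N A : ℕ}
    (hN : A + 2 ≤ N) (d : ℕ) (g : ℕ → K) :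
    ∑ y ∈ Finset.range N with 1 ≤ y ∧ y ≤ A + 1 - d, p ^ (y - 1) * g y =
      p ^ A * ∑ y ∈ Finset.Ico d (A + 1), p⁻¹ ^ y * g (A + 1 - y) := by
  have hreflect := Finset.sum_Ico_reflect (fun y => p ^ (y - 1) * g y) d (A + 1).le_succ
  have hpow {y : ℕ} (hy : y ≤ A) : p ^ (A + 1 - y - 1) = p ^ A * p⁻¹ ^ y := by
    rw [show A + 1 - y - 1 = A - y by omega, pow_sub₀ p hp hy, inv_pow]
  calc
    _ = ∑ y ∈ Finset.Ico 1 (A + 2 - d), p ^ (y - 1) * g y := by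
      refine Finset.sum_congr ?_ fun _ _ => rfl
      ext y
      simp only [Finset.mem_filter, Finset.mem_range, Finset.mem_Ico]
      omega
    _ = ∑ y ∈ Finset.Ico d (A + 1), p ^ (A + 1 - y - 1) * g (A + 1 - y) := by
      rw [hreflect, Nat.add_sub_cancel_left]
    _ = _ := by
      rw [Finset.mul_sum]
      refine Finset.sum_congr rfl fun y hy => ?_
      rw [hpow (Nat.lt_succ_iff.mp (Finset.mem_Ico.mp hy).2), mul_assoc]

theorem heapSum_eq_flaggedSum {K : Type*} [Field K] {p : K} (hp : p ≠ 0)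
    (hN : totalLength a n + 2 ≤ N) (g : ℕ → K) :
    heapSum p a n N g = p ^ (∑ i ∈ Finset.Icc 1 n, totalLength a i) *
      flaggedSum (p⁻¹ ^ ·) (totalLength a) n fun d => g (totalLength a n + 1 - d) := by
  induction n generalizing g with
  | zero => simp [heapSum, IsHeapTypeII, leftAbs, flaggedSum_zero, totalLength_zero]
  | succ n ih =>
    have hlen := totalLength_succ a n
    rw [heapSum_succ, ih (by omega), flaggedSum_succ, Finset.sum_Icc_succ_top (by omega), pow_add,
      mul_assoc, ← smul_eq_mul (p ^ totalLength a (n + 1)), ← map_smul]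
    congr 1
    refine flaggedSum_congr _ _ fun d hd => ?_
    have hshift : totalLength a n + 1 - d + a (n + 1) = totalLength a (n + 1) + 1 - d := by omega
    rw [hshift, sum_pow_mul_reflect hp hN]
    rfl

end HeapSum

lemma heapGF_eq_heapSum (r : ℕ) (a : ℕ → ℕ) :
    heapGF r a = heapSum RatFunc.X a (r - 1) (2 + totalLength a (r - 1)) 1 := by
  simp only [heapSum, Pi.one_apply, mul_one]
  rfl

/-- `G(𝔞) = p^{D(𝔞)} · det[(w_{ij})_{1≤i,j≤r-1}]` where
`D(𝔞) = Σ_{j=1}^{r-1} (r-j)·a_j`. -/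
theorem stmt_4 (r : ℕ) (hr : 2 ≤ r) (a : ℕ → ℕ) :
    heapGF r a =
      RatFunc.X ^ (∑ j ∈ Finset.Icc 1 (r - 1), (r - j) * a j) *
        (Matrix.of fun i j : Fin (r - 1) => wEntry a ((i : ℕ) + 1) ((j : ℕ) + 1)).det := by
  obtain ⟨n, rfl⟩ : ∃ n, r = n + 1 := ⟨r - 1, by omega⟩
  simp only [wEntry_succ_succ, Nat.add_sub_cancel]
  rw [heapGF_eq_heapSum, Nat.add_sub_cancel,
    heapSum_eq_flaggedSum RatFunc.X_ne_zero (Nat.add_comm _ _).le,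
    sum_Icc_mul_eq_sum_totalLength, det_flaggedEsymm _ (totalLength_mono a)]
  rfl
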